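/- For every nonzero p ∈ ℝ⁴, the function (q₁, q₂) ↦ 1/(‖q₁‖²‖q₂‖²‖q₁ − q₂‖²‖p − q₁‖²‖p − q₂‖²) is Lebesgue integrable on ℝ⁴ × ℝ⁴ and (1/π⁴) ∫_{ℝ⁴×ℝ⁴} dq₁ dq₂ / (‖q₁‖²‖q₂‖²‖q₁ − q₂‖²‖p − q₁‖²‖p − q₂‖²) = 6ζ(3)/‖p‖². -/

import Mathlib

open MeasureTheory

/-!
Put `c = ‖p‖`, `‖q₁‖ = c eˢ`, `‖q₂‖ = c eᵗ`. By the law of cosines every propagator then has the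
form `cosh τ - cos γ`, up to exponential factors, with `γ` an angle and `τ` one of `s`, `t`,
`s - t`. Integrating out the azimuth of `q₂` around the axis `p` turns the propagator of `q₁ - q₂`
into a logarithm, after which all three factors are Fourier sine series in the polar angles `θ`,
`φ`, with coefficients `2 e^{-n|s|}`, `2 e^{-n|t|}` and `(4 / n) e^{-n|s - t|} sin nθ` for
`n ≥ 1`. By orthogonality of the sines the angular integral is
`∑ (4π² / n) e^{-n(|s| + |t| + |s - t|)}`, and `∫∫ e^{-n(|s| + |t| + |s - t|)} ds dt = 3 / (2n²)`,
so the modes add up to a multiple of `ζ(3)`. All terms being nonnegative, Tonelli's theorem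
applies throughout and integrability comes out of the same computation.
-/

section

open Real Set
open scoped ENNReal

/-! ### Sine series of the angular factors -/

lemma cosh_sub_cos_pos {t : ℝ} (ht : t ≠ 0) (θ : ℝ) : 0 < cosh t - cos θ :=
  sub_pos.2 ((cos_le_one θ).trans_lt (one_lt_cosh.2 ht))

lemma normSq_one_sub_cexp (t θ : ℝ) :
    Complex.normSq (1 - Complex.exp ⟨-t, θ⟩) = 2 * exp (-t) * (cosh t - cos θ) := by
  simp only [Complex.normSq_apply, Complex.sub_re, Complex.sub_im, Complex.one_re, Complex.one_im,
    Complex.exp_re, Complex.exp_im]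
  have hexp : exp t * exp (-t) = 1 := by rw [← exp_add, add_neg_cancel, exp_zero]
  rw [cosh_eq]
  linear_combination exp (-t) ^ 2 * sin_sq_add_cos_sq θ - hexp

lemma norm_cexp_lt_one {t : ℝ} (ht : 0 < t) (θ : ℝ) : ‖Complex.exp ⟨-t, θ⟩‖ < 1 := by
  simpa [Complex.norm_exp] using ht

lemma cexp_pow (t θ : ℝ) (n : ℕ) :
    Complex.exp ⟨-t, θ⟩ ^ n = Complex.exp ⟨-(n * t), n * θ⟩ := by
  rw [← Complex.exp_nat_mul]
  congr 1
  apply Complex.ext <;> simp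

lemma hasSum_exp_neg_mul_sin {t : ℝ} (ht : 0 < t) (θ : ℝ) :
    HasSum (fun n : ℕ => exp (-((n + 1) * t)) * sin ((n + 1) * θ))
      (sin θ / (2 * (cosh t - cos θ))) := by
  set w := Complex.exp ⟨-t, θ⟩ with hw
  have hgeom : HasSum (fun n : ℕ => (w ^ (n + 1)).im) (w * (1 - w)⁻¹).im := by
    simp_rw [pow_succ']
    exact Complex.hasSum_im ((hasSum_geometric_of_norm_lt_one (norm_cexp_lt_one ht θ)).mul_left w)
  convert hgeom using 1
  · ext n
    rw [hw, cexp_pow, Complex.exp_im]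
    push_cast
    rfl
  · have him : (w * (1 - w)⁻¹).im = w.im / Complex.normSq (1 - w) := by
      simp only [Complex.mul_im, Complex.inv_re, Complex.inv_im, Complex.sub_re, Complex.sub_im,
        Complex.one_re, Complex.one_im]
      ring
    rw [him, hw, normSq_one_sub_cexp, Complex.exp_im, mul_right_comm, mul_comm (exp _),
      mul_div_mul_right _ _ (exp_ne_zero _)]

lemma hasSum_exp_neg_mul_cos_div {t : ℝ} (ht : 0 < t) (θ : ℝ) :
    HasSum (fun n : ℕ => exp (-((n + 1) * t)) * cos ((n + 1) * θ) / (n + 1))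
      (-log (2 * exp (-t) * (cosh t - cos θ)) / 2) := by
  set w := Complex.exp ⟨-t, θ⟩ with hw
  have hlog : HasSum (fun n : ℕ => (w ^ (n + 1) / (n + 1 : ℕ)).re) (-Complex.log (1 - w)).re := by
    have h := Complex.hasSum_re (Complex.hasSum_taylorSeries_neg_log (norm_cexp_lt_one ht θ))
    rw [← hasSum_nat_add_iff' 1] at h
    simpa using h
  convert hlog using 1
  · ext n
    rw [hw, cexp_pow, Complex.div_natCast_re, Complex.exp_re]
    push_cast
    rfl
  · rw [Complex.neg_re, Complex.log_re, Complex.norm_def, normSq_one_sub_cexp,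
      log_sqrt (by have := cosh_sub_cos_pos ht.ne' θ; positivity), neg_div]

/-- The Fourier sine series on `[0, π]` with coefficients `c`, where `c n` is the coefficient of
`sin ((n + 1) θ)`; the sum is only meaningful for summable `c`. -/
noncomputable def sineSeries (c : ℕ → ℝ) (θ : ℝ) : ℝ := ∑' n : ℕ, c n * sin ((n + 1) * θ)

/-- The conjugate Poisson kernel of the disc in logarithmic radius: twice the imaginary part of
`w / (1 - w)` at `w = exp (-|t| + θ i)`. It is what a propagator `‖p - q‖⁻²` contributes when `t` is
`log (‖q‖ / ‖p‖)` and `θ` is the angle between `p` and `q`. -/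
noncomputable def conjPoissonKernel (t θ : ℝ) : ℝ := sin θ / (cosh t - cos θ)

/-- The result of integrating the propagator `‖q₁ - q₂‖⁻²` over the azimuth of `q₂` around the axis
`p`, up to elementary factors: `t` is `log (‖q₁‖ / ‖q₂‖)` and `θ`, `φ` are the angles of `q₁`, `q₂`
with `p`. -/
noncomputable def azimuthalLog (t θ φ : ℝ) : ℝ :=
  log ((cosh t - cos (θ + φ)) / (cosh t - cos (θ - φ)))

/-- The integrand left over the polar angles `θ`, `φ` of the two loop momenta after the azimuthal
integration, at logarithmic radii `s`, `t`. The difference `τ = s - t` is kept as a separate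
argument since the angular integral treats the three of them symmetrically. -/
noncomputable def angularDensity (s t τ θ φ : ℝ) : ℝ :=
  conjPoissonKernel s θ * conjPoissonKernel t φ * azimuthalLog τ θ φ

lemma conjPoissonKernel_eq_sineSeries {t : ℝ} (ht : t ≠ 0) (θ : ℝ) :
    conjPoissonKernel t θ = sineSeries (fun n => 2 * exp (-((n + 1) * |t|))) θ := by
  have h := (hasSum_exp_neg_mul_sin (abs_pos.2 ht) θ).mul_left 2
  simp_rw [← mul_assoc] at h
  rw [sineSeries, h.tsum_eq, cosh_abs, conjPoissonKernel, ← mul_div_assoc,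
    mul_div_mul_left _ _ two_ne_zero]

lemma azimuthalLog_eq_sineSeries {t : ℝ} (ht : t ≠ 0) (θ φ : ℝ) :
    azimuthalLog t θ φ =
      sineSeries (fun n => 4 / (n + 1) * sin ((n + 1) * θ) * exp (-((n + 1) * |t|))) φ := by
  have h := ((hasSum_exp_neg_mul_cos_div (abs_pos.2 ht) (θ - φ)).sub
    (hasSum_exp_neg_mul_cos_div (abs_pos.2 ht) (θ + φ))).mul_left 2
  have hpos := cosh_sub_cos_pos ht
  have hlog (x : ℝ) : log (2 * exp (-|t|) * (cosh |t| - cos x)) =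
      log (2 * exp (-|t|)) + log (cosh t - cos x) := by
    rw [cosh_abs, log_mul (by positivity) (hpos x).ne']
  rw [hlog, hlog] at h
  rw [azimuthalLog, log_div (hpos _).ne' (hpos _).ne']
  calc log (cosh t - cos (θ + φ)) - log (cosh t - cos (θ - φ)) = _ := by ring
    _ = _ := h.tsum_eq.symm
    _ = _ := by
      refine tsum_congr fun n => ?_
      rw [mul_sub ((n : ℝ) + 1), mul_add ((n : ℝ) + 1), cos_sub, cos_add]
      ring

lemma norm_mul_sin_le (x y : ℝ) : ‖x * sin y‖ ≤ |x| := by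
  rw [norm_eq_abs, abs_mul]
  exact mul_le_of_le_one_right (abs_nonneg x) (abs_sin_le_one y)

lemma continuous_sineSeries {c : ℕ → ℝ} (hc : Summable fun n => |c n|) :
    Continuous (sineSeries c) :=
  continuous_tsum (fun n => by fun_prop) hc fun _ _ => norm_mul_sin_le _ _

lemma integral_cos_int_mul (m : ℤ) :
    ∫ θ in (0 : ℝ)..π, cos (m * θ) = if m = 0 then π else 0 := by
  split_ifs with h
  · simp [h]
  · rw [intervalIntegral.integral_comp_mul_left (fun x => cos x) (Int.cast_ne_zero.2 h)]
    simp [sin_int_mul_pi]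

lemma integral_sin_mul_sin (n m : ℕ) :
    ∫ θ in (0 : ℝ)..π, sin ((n + 1) * θ) * sin ((m + 1) * θ) = if m = n then π / 2 else 0 := by
  have hprod (θ : ℝ) : sin ((n + 1) * θ) * sin ((m + 1) * θ) =
      (cos (((n - m : ℤ) : ℝ) * θ) - cos (((n + m + 2 : ℤ) : ℝ) * θ)) / 2 := by
    have hsub : ((n - m : ℤ) : ℝ) * θ = (n + 1) * θ - (m + 1) * θ := by push_cast; ring
    have hadd : ((n + m + 2 : ℤ) : ℝ) * θ = (n + 1) * θ + (m + 1) * θ := by push_cast; ring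
    rw [hsub, hadd, cos_sub, cos_add]
    ring
  have hint (k : ℤ) : IntervalIntegrable (fun θ : ℝ => cos (k * θ)) volume 0 π :=
    (by fun_prop : Continuous fun θ : ℝ => cos (k * θ)).intervalIntegrable _ _
  simp_rw [hprod]
  rw [intervalIntegral.integral_div, intervalIntegral.integral_sub (hint _) (hint _),
    integral_cos_int_mul, integral_cos_int_mul, if_neg (by positivity : (n + m + 2 : ℤ) ≠ 0)]
  simp only [sub_eq_zero, Nat.cast_inj, eq_comm (a := n), sub_zero]
  split_ifs <;> simp

lemma hasSum_integral_sineSeries_mul {c : ℕ → ℝ} (hc : Summable fun n => |c n|) {g : ℝ → ℝ}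
    (hg : Continuous g) :
    HasSum (fun n : ℕ => c n * ∫ θ in (0 : ℝ)..π, sin ((n + 1) * θ) * g θ)
      (∫ θ in (0 : ℝ)..π, sineSeries c θ * g θ) := by
  have hterm (n : ℕ) : Continuous fun θ : ℝ => c n * sin ((n + 1) * θ) * g θ := by fun_prop
  have hbound (n : ℕ) (θ : ℝ) : ‖c n * sin ((n + 1) * θ) * g θ‖ ≤ |c n| * |g θ| := by
    rw [norm_mul, norm_eq_abs (g θ)]
    gcongr
    exact norm_mul_sin_le _ _
  have hint : IntervalIntegrable (fun θ => ∑' n, |c n| * |g θ|) volume 0 π := by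
    simp_rw [tsum_mul_right]
    exact (hg.abs.const_smul (∑' n, |c n|)).intervalIntegrable _ _
  have hsum (θ : ℝ) : HasSum (fun n : ℕ => c n * sin ((n + 1) * θ) * g θ)
      (sineSeries c θ * g θ) :=
    (Summable.of_norm_bounded hc fun n => norm_mul_sin_le _ _).hasSum.mul_right _
  have h := intervalIntegral.hasSum_integral_of_dominated_convergence (a := 0) (b := π)
    (F := fun n θ => c n * sin ((n + 1) * θ) * g θ) (f := fun θ => sineSeries c θ * g θ)
    (fun n θ => |c n| * |g θ|) (fun n => (hterm n).aestronglyMeasurable)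
    (fun n => .of_forall fun θ _ => hbound n θ) (.of_forall fun θ _ => hc.mul_right _) hint
    (.of_forall fun θ _ => hsum θ)
  simpa only [mul_assoc, intervalIntegral.integral_const_mul] using h

lemma hasSum_integral_sineSeries_mul_sineSeries {c d : ℕ → ℝ} (hc : Summable fun n => |c n|)
    (hd : Summable fun n => |d n|) :
    HasSum (fun n => π / 2 * (c n * d n))
      (∫ θ in (0 : ℝ)..π, sineSeries c θ * sineSeries d θ) := by
  have hcoeff (n : ℕ) : ∫ θ in (0 : ℝ)..π, sin ((n + 1) * θ) * sineSeries d θ = π / 2 * d n := by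
    have h := hasSum_integral_sineSeries_mul hd
      (by fun_prop : Continuous fun θ : ℝ => sin ((n + 1) * θ))
    simp_rw [integral_sin_mul_sin] at h
    have hsingle := hasSum_single (f := fun m => d m * if n = m then π / 2 else 0) n
      fun m hm => by rw [if_neg hm.symm, mul_zero]
    rw [if_pos rfl] at hsingle
    simp_rw [mul_comm (sin _), mul_comm (π / 2)]
    exact h.unique hsingle
  convert hasSum_integral_sineSeries_mul hc (continuous_sineSeries hd) using 2 with n
  rw [hcoeff]
  ring

lemma summable_abs_mul_exp_neg {t B : ℝ} (ht : 0 < t) {u : ℕ → ℝ} (hu : ∀ n, |u n| ≤ B) :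
    Summable fun n : ℕ => |u n * exp (-((n + 1) * t))| := by
  have hgeom : Summable fun n : ℕ => exp (-t) ^ (n + 1) :=
    (summable_nat_add_iff 1).2 (summable_geometric_of_lt_one (exp_pos _).le (by simpa using ht))
  refine .of_nonneg_of_le (fun n => abs_nonneg _) (fun n => ?_) (hgeom.mul_left B)
  rw [abs_mul, abs_of_pos (exp_pos _), ← exp_nat_mul, Nat.cast_succ, mul_neg]
  gcongr
  exact hu n

lemma abs_div_succ_le {a : ℝ} (ha : 0 ≤ a) (n : ℕ) : |a / (n + 1)| ≤ a := by
  rw [abs_of_nonneg (by positivity)]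
  exact div_le_self ha (by simp)

lemma integral_conjPoissonKernel_mul_azimuthalLog {t τ : ℝ} (ht : t ≠ 0) (hτ : τ ≠ 0) (θ : ℝ) :
    ∫ φ in (0 : ℝ)..π, conjPoissonKernel t φ * azimuthalLog τ θ φ =
      sineSeries (fun n => 4 * π / (n + 1) * exp (-((n + 1) * (|t| + |τ|)))) θ := by
  simp_rw [conjPoissonKernel_eq_sineSeries ht, azimuthalLog_eq_sineSeries hτ]
  have hK := summable_abs_mul_exp_neg (abs_pos.2 ht) (u := fun _ => 2) fun _ => le_rfl
  have hL := summable_abs_mul_exp_neg (abs_pos.2 hτ)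
    (u := fun n => 4 / (n + 1) * sin ((n + 1) * θ))
    fun n => (norm_mul_sin_le _ _).trans (abs_div_succ_le (by norm_num) n)
  rw [← (hasSum_integral_sineSeries_mul_sineSeries hK hL).tsum_eq, sineSeries]
  refine tsum_congr fun n => ?_
  rw [mul_add, neg_add, exp_add]
  ring

lemma hasSum_integral_angularDensity {s t τ : ℝ} (hs : s ≠ 0) (ht : t ≠ 0) (hτ : τ ≠ 0) :
    HasSum (fun n : ℕ => 4 * π ^ 2 / (n + 1) * exp (-((n + 1) * (|s| + |t| + |τ|))))
      (∫ θ in (0 : ℝ)..π, ∫ φ in (0 : ℝ)..π, angularDensity s t τ θ φ) := by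
  simp_rw [angularDensity, mul_assoc (conjPoissonKernel s _), intervalIntegral.integral_const_mul,
    integral_conjPoissonKernel_mul_azimuthalLog ht hτ, conjPoissonKernel_eq_sineSeries hs]
  have hK := summable_abs_mul_exp_neg (abs_pos.2 hs) (u := fun _ => 2) fun _ => le_rfl
  have hKL := summable_abs_mul_exp_neg (add_pos (abs_pos.2 ht) (abs_pos.2 hτ))
    (u := fun n => 4 * π / (n + 1)) (abs_div_succ_le (by positivity))
  convert hasSum_integral_sineSeries_mul_sineSeries hK hKL using 2 with n
  rw [add_assoc, mul_add _ |s|, neg_add, exp_add]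
  ring

lemma conjPoissonKernel_nonneg {t θ : ℝ} (ht : t ≠ 0) (hθ : θ ∈ Ioo 0 π) :
    0 ≤ conjPoissonKernel t θ :=
  div_nonneg (sin_pos_of_mem_Ioo hθ).le (cosh_sub_cos_pos ht θ).le

lemma azimuthalLog_nonneg {t θ φ : ℝ} (ht : t ≠ 0) (hθ : θ ∈ Ioo 0 π) (hφ : φ ∈ Ioo 0 π) :
    0 ≤ azimuthalLog t θ φ := by
  refine log_nonneg ((one_le_div (cosh_sub_cos_pos ht _)).2 ?_)
  have hsin : 0 < sin θ * sin φ := mul_pos (sin_pos_of_mem_Ioo hθ) (sin_pos_of_mem_Ioo hφ)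
  rw [cos_add, cos_sub]
  linarith

lemma continuous_conjPoissonKernel {t : ℝ} (ht : t ≠ 0) : Continuous (conjPoissonKernel t) :=
  continuous_sin.div (by fun_prop) fun θ => (cosh_sub_cos_pos ht θ).ne'

lemma continuous_azimuthalLog {t : ℝ} (ht : t ≠ 0) :
    Continuous fun x : ℝ × ℝ => azimuthalLog t x.1 x.2 :=
  (Continuous.div (by fun_prop) (by fun_prop) fun _ => (cosh_sub_cos_pos ht _).ne').log
    fun _ => (div_pos (cosh_sub_cos_pos ht _) (cosh_sub_cos_pos ht _)).ne'

lemma lintegral_Ioo_ofReal {f : ℝ → ℝ} {a b : ℝ} (hab : a ≤ b) (hf : Continuous f)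
    (h0 : ∀ x ∈ Ioo a b, 0 ≤ f x) :
    ∫⁻ x in Ioo a b, ENNReal.ofReal (f x) = ENNReal.ofReal (∫ x in a..b, f x) := by
  rw [intervalIntegral.integral_of_le hab, integral_Ioc_eq_integral_Ioo,
    ofReal_integral_eq_lintegral_ofReal]
  · exact (hf.integrableOn_Icc).mono_set Ioo_subset_Icc_self
  · exact ae_restrict_of_forall_mem measurableSet_Ioo h0

lemma lintegral_Ioo_lintegral_Ioo_ofReal {F : ℝ → ℝ → ℝ} {a b c d : ℝ} (hab : a ≤ b) (hcd : c ≤ d)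
    (hF : Continuous (Function.uncurry F)) (h0 : ∀ x ∈ Ioo a b, ∀ y ∈ Ioo c d, 0 ≤ F x y) :
    ∫⁻ x in Ioo a b, ∫⁻ y in Ioo c d, ENNReal.ofReal (F x y) =
      ENNReal.ofReal (∫ x in a..b, ∫ y in c..d, F x y) := by
  rw [setLIntegral_congr_fun measurableSet_Ioo fun x hx =>
    lintegral_Ioo_ofReal (f := F x) hcd (hF.uncurry_left x) (h0 x hx)]
  refine lintegral_Ioo_ofReal hab
    (intervalIntegral.continuous_parametric_intervalIntegral_of_continuous' hF c d) fun x hx => ?_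
  rw [intervalIntegral.integral_of_le hcd, integral_Ioc_eq_integral_Ioo]
  exact setIntegral_nonneg measurableSet_Ioo (h0 x hx)

lemma lintegral_angularDensity {s t τ : ℝ} (hs : s ≠ 0) (ht : t ≠ 0) (hτ : τ ≠ 0) :
    ∫⁻ θ in Ioo 0 π, ∫⁻ φ in Ioo 0 π, ENNReal.ofReal (angularDensity s t τ θ φ) =
      ∑' n : ℕ, ENNReal.ofReal
        (4 * π ^ 2 / (n + 1) * exp (-((n + 1) * (|s| + |t| + |τ|)))) := by
  have hsum := hasSum_integral_angularDensity hs ht hτ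
  rw [← ENNReal.ofReal_tsum_of_nonneg (fun n => by positivity) hsum.summable, hsum.tsum_eq]
  refine lintegral_Ioo_lintegral_Ioo_ofReal pi_pos.le pi_pos.le ?_ fun θ hθ φ hφ => ?_
  · exact (((continuous_conjPoissonKernel hs).comp continuous_fst).mul
      ((continuous_conjPoissonKernel ht).comp continuous_snd)).mul (continuous_azimuthalLog hτ)
  · exact mul_nonneg (mul_nonneg (conjPoissonKernel_nonneg hs hθ) (conjPoissonKernel_nonneg ht hφ))
      (azimuthalLog_nonneg hτ hθ hφ)

lemma lintegral_sin_div_sub_mul_cos {b c : ℝ} (hc : 0 < c) (hcb : c < b) :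
    ∫⁻ ψ in Ioo 0 π, ENNReal.ofReal (sin ψ / (b - c * cos ψ)) =
      ENNReal.ofReal (log ((b + c) / (b - c)) / c) := by
  have hpos (ψ : ℝ) : 0 < b - c * cos ψ := by nlinarith [cos_le_one ψ]
  have hcont : Continuous fun ψ => sin ψ / (b - c * cos ψ) :=
    continuous_sin.div (by fun_prop) fun ψ => (hpos ψ).ne'
  have hderiv (ψ : ℝ) :
      HasDerivAt (fun ψ => log (b - c * cos ψ) / c) (sin ψ / (b - c * cos ψ)) ψ := by
    refine ((((hasDerivAt_cos ψ).const_mul c).const_sub b).log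
      (hpos ψ).ne').div_const c |>.congr_deriv ?_
    rw [mul_neg, neg_neg, div_right_comm, mul_div_cancel_left₀ _ hc.ne']
  rw [lintegral_Ioo_ofReal pi_pos.le hcont fun ψ hψ =>
      div_nonneg (sin_pos_of_mem_Ioo hψ).le (hpos ψ).le,
    intervalIntegral.integral_eq_sub_of_hasDerivAt (fun ψ _ => hderiv ψ)
      (hcont.intervalIntegrable _ _), cos_pi, cos_zero, ← sub_div,
    log_div (by linarith) (sub_pos.2 hcb).ne', mul_one, mul_neg_one, sub_neg_eq_add]

lemma lintegral_azimuth {τ θ φ : ℝ} (hτ : τ ≠ 0) (hθ : θ ∈ Ioo 0 π) (hφ : φ ∈ Ioo 0 π) :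
    ∫⁻ ψ in Ioo 0 π, ENNReal.ofReal
        (sin ψ / (cosh τ - (cos θ * cos φ + sin θ * sin φ * cos ψ))) =
      ENNReal.ofReal (azimuthalLog τ θ φ / (sin θ * sin φ)) := by
  have hc : 0 < sin θ * sin φ := mul_pos (sin_pos_of_mem_Ioo hθ) (sin_pos_of_mem_Ioo hφ)
  have hcb : sin θ * sin φ < cosh τ - cos θ * cos φ := by
    linarith [cosh_sub_cos_pos hτ (θ - φ), cos_sub θ φ]
  simp_rw [← sub_sub]
  rw [lintegral_sin_div_sub_mul_cos hc hcb, azimuthalLog, cos_add, cos_sub, ← sub_add, ← sub_sub]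

/-! ### The radial integral -/

lemma abs_add_add_abs_sub_eq_two_mul_max (a b : ℝ) : |a + b| + |a - b| = 2 * max |a| |b| := by
  grind

lemma lintegral_comp_abs (f : ℝ → ℝ≥0∞) : ∫⁻ t, f |t| = 2 * ∫⁻ t in Ioi 0, f t := by
  have hpos : ∫⁻ t in Ioi 0, f |t| = ∫⁻ t in Ioi 0, f t :=
    setLIntegral_congr_fun measurableSet_Ioi fun t ht => by rw [abs_of_pos ht]
  have hneg : ∫⁻ t in Iic 0, f |t| = ∫⁻ t in Ioi 0, f |t| := by
    rw [setLIntegral_congr Ioi_ae_eq_Ici,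
      ← (Measure.measurePreserving_neg volume).setLIntegral_comp_preimage_emb
        (MeasurableEquiv.neg ℝ).measurableEmbedding]
    simp
  rw [← lintegral_add_compl _ (measurableSet_Ioi (a := (0 : ℝ))), compl_Ioi, hneg, hpos, two_mul]

lemma lintegral_pow_mul_exp_neg_mul_Ioi {r : ℝ} (hr : 0 < r) (n : ℕ) :
    ∫⁻ t in Ioi 0, ENNReal.ofReal (t ^ n * exp (-(r * t))) =
      ENNReal.ofReal (n.factorial / r ^ (n + 1)) := by
  have hint : ∫ t in Ioi 0, t ^ n * exp (-(r * t)) = n.factorial / r ^ (n + 1) := by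
    have h := integral_rpow_mul_exp_neg_mul_Ioi (a := n + 1) (by positivity) hr
    rw [Gamma_nat_eq_factorial, add_sub_cancel_right] at h
    simp_rw [rpow_natCast] at h
    rw [h, ← Nat.cast_succ, rpow_natCast, one_div, inv_pow, inv_mul_eq_div]
  rw [← hint, ofReal_integral_eq_lintegral_ofReal]
  · exact .of_integral_ne_zero (by rw [hint]; positivity)
  · exact ae_restrict_of_forall_mem measurableSet_Ioi fun t (ht : 0 < t) => by positivity

lemma lintegral_exp_neg_mul_Ioi {k : ℝ} (hk : 0 < k) (c : ℝ) :
    ∫⁻ s in Ioi c, ENNReal.ofReal (exp (-(k * s))) = ENNReal.ofReal (exp (-(k * c)) / k) := by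
  simp_rw [← neg_mul]
  rw [← ofReal_integral_eq_lintegral_ofReal (integrableOn_exp_mul_Ioi (neg_neg_of_pos hk) c)
    (.of_forall fun _ => (exp_pos _).le), integral_exp_mul_Ioi (neg_neg_of_pos hk), neg_div_neg_eq]

lemma lintegral_exp_neg_mul_max {k c : ℝ} (hk : 0 < k) (hc : 0 ≤ c) :
    ∫⁻ u in Ioi 0, ENNReal.ofReal (exp (-(k * max u c))) =
      ENNReal.ofReal (exp (-(k * c)) * (c + 1 / k)) := by
  have hlow : ∫⁻ u in Ioc 0 c, ENNReal.ofReal (exp (-(k * max u c))) =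
      ENNReal.ofReal (exp (-(k * c)) * c) := by
    rw [setLIntegral_congr_fun measurableSet_Ioc fun u hu => by rw [max_eq_right hu.2],
      setLIntegral_const, volume_Ioc, sub_zero, ENNReal.ofReal_mul (exp_pos _).le]
  have hhigh : ∫⁻ u in Ioi c, ENNReal.ofReal (exp (-(k * max u c))) =
      ENNReal.ofReal (exp (-(k * c)) / k) := by
    rw [← lintegral_exp_neg_mul_Ioi hk]
    exact setLIntegral_congr_fun measurableSet_Ioi fun u hu => by rw [max_eq_left (mem_Ioi.1 hu).le]
  rw [← Ioc_union_Ioi_eq_Ioi hc, lintegral_union measurableSet_Ioi Ioc_disjoint_Ioi_same, hlow,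
    hhigh, ← ENNReal.ofReal_add (by positivity) (by positivity), mul_add, mul_one_div]

lemma lintegral_exp_neg_abs_add_abs_sub {k : ℝ} (hk : 0 < k) (s : ℝ) :
    ∫⁻ t, ENNReal.ofReal (exp (-(k * (|t| + |s - t|)))) =
      ENNReal.ofReal (exp (-(k * |s|)) * (|s| + 1 / k)) := by
  have hmax (u : ℝ) : k * (|u + s / 2| + |s - (u + s / 2)|) = 2 * k * max |u| |s / 2| := by
    have hsub : s - (u + s / 2) = -(u - s / 2) := by ring
    rw [hsub, abs_neg, abs_add_add_abs_sub_eq_two_mul_max]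
    ring
  rw [← lintegral_add_right_eq_self _ (s / 2)]
  simp_rw [hmax]
  rw [lintegral_comp_abs fun u => ENNReal.ofReal (exp (-(2 * k * max u |s / 2|))),
    lintegral_exp_neg_mul_max (by positivity) (abs_nonneg _), ← ENNReal.ofReal_ofNat 2,
    ← ENNReal.ofReal_mul (by norm_num), abs_div, abs_two]
  congr 1
  field_simp

lemma lintegral_lintegral_exp_neg_abs {k : ℝ} (hk : 0 < k) :
    ∫⁻ s, ∫⁻ t, ENNReal.ofReal (exp (-(k * (|s| + |t| + |s - t|)))) =
      ENNReal.ofReal (3 / (2 * k ^ 2)) := by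
  have hinner (s : ℝ) : ∫⁻ t, ENNReal.ofReal (exp (-(k * (|s| + |t| + |s - t|)))) =
      ENNReal.ofReal (|s| ^ 1 * exp (-(2 * k * |s|))) +
        ENNReal.ofReal (1 / k) * ENNReal.ofReal (|s| ^ 0 * exp (-(2 * k * |s|))) := by
    have hexp : exp (-(2 * k * |s|)) = exp (-(k * |s|)) * exp (-(k * |s|)) := by
      rw [← exp_add]
      ring_nf
    simp_rw [add_assoc |s|, mul_add k |s|, neg_add, exp_add, ENNReal.ofReal_mul (exp_pos _).le]
    rw [lintegral_const_mul' _ _ ENNReal.ofReal_ne_top, lintegral_exp_neg_abs_add_abs_sub hk,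
      ← ENNReal.ofReal_mul (by positivity), ← ENNReal.ofReal_mul (by positivity),
      ← ENNReal.ofReal_add (by positivity) (by positivity), hexp]
    congr 1
    ring
  simp_rw [hinner]
  rw [lintegral_comp_abs fun s => ENNReal.ofReal (s ^ 1 * exp (-(2 * k * s))) +
        ENNReal.ofReal (1 / k) * ENNReal.ofReal (s ^ 0 * exp (-(2 * k * s))),
    lintegral_add_left (by fun_prop), lintegral_const_mul' _ _ ENNReal.ofReal_ne_top,
    lintegral_pow_mul_exp_neg_mul_Ioi (by positivity),
    lintegral_pow_mul_exp_neg_mul_Ioi (by positivity), ← ENNReal.ofReal_mul (by positivity),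
    ← ENNReal.ofReal_add (by positivity) (by positivity), ← ENNReal.ofReal_ofNat 2,
    ← ENNReal.ofReal_mul (by norm_num)]
  congr 1
  simp only [Nat.factorial_one, Nat.factorial_zero, Nat.cast_one, Nat.reduceAdd, zero_add, pow_one]
  field_simp
  norm_num

/-! ### Hyperspherical coordinates -/

lemma preimage_polarCoord_symm_upperHalfPlane :
    polarCoord.symm ⁻¹' (univ ×ˢ Ioi 0) ∩ polarCoord.target = Ioi 0 ×ˢ Ioo 0 π := by
  ext ⟨r, θ⟩
  simp only [polarCoord_target, mem_inter_iff, mem_preimage, polarCoord_symm_apply, mem_prod,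
    mem_univ, mem_Ioi, mem_Ioo, true_and]
  constructor
  · rintro ⟨hy, hr, hθ, hθπ⟩
    have hsin : 0 < sin θ := pos_of_mul_pos_right hy hr.le
    exact ⟨hr, not_le.1 fun h => hsin.not_ge (sin_nonpos_of_nonpos_of_neg_pi_le h hθ.le), hθπ⟩
  · rintro ⟨hr, hθ, hθπ⟩
    exact ⟨mul_pos hr (sin_pos_of_pos_of_lt_pi hθ hθπ), hr, by linarith [pi_pos], hθπ⟩

lemma lintegral_halfPlane_eq_polar {g : ℝ → ℝ → ℝ≥0∞} (hg : Measurable (Function.uncurry g)) :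
    ∫⁻ x, ∫⁻ y in Ioi 0, g x y =
      ∫⁻ r in Ioi 0, ∫⁻ θ in Ioo 0 π, ENNReal.ofReal r * g (r * cos θ) (r * sin θ) := by
  have hsymm : Measurable polarCoord.symm :=
    (by fun_prop : Measurable fun z : ℝ × ℝ => (z.1 * cos z.2, z.1 * sin z.2))
  calc ∫⁻ x, ∫⁻ y in Ioi 0, g x y
      = ∫⁻ z in univ ×ˢ Ioi 0, Function.uncurry g z := by
        rw [Measure.volume_eq_prod, setLIntegral_prod _ hg.aemeasurable, setLIntegral_univ]
        rfl
    _ = ∫⁻ z in polarCoord.target, (polarCoord.symm ⁻¹' (univ ×ˢ Ioi 0)).indicator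
          (fun z => ENNReal.ofReal z.1 * Function.uncurry g (polarCoord.symm z)) z := by
        rw [← lintegral_indicator (MeasurableSet.univ.prod measurableSet_Ioi),
          ← lintegral_comp_polarCoord_symm]
        refine lintegral_congr fun z => ?_
        rw [smul_eq_mul, indicator_mul_right]
        rfl
    _ = ∫⁻ z in Ioi 0 ×ˢ Ioo 0 π,
          ENNReal.ofReal z.1 * g (z.1 * cos z.2) (z.1 * sin z.2) := by
        rw [setLIntegral_indicator (hsymm (MeasurableSet.univ.prod measurableSet_Ioi)),
          preimage_polarCoord_symm_upperHalfPlane]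
        rfl
    _ = _ := by
        rw [Measure.volume_eq_prod, setLIntegral_prod]
        fun_prop

lemma lintegral_comp_sqrt_sq_add_sq {h : ℝ → ℝ≥0∞} (hh : Measurable h) :
    ∫⁻ w : ℝ × ℝ, h √(w.1 ^ 2 + w.2 ^ 2) =
      ENNReal.ofReal (2 * π) * ∫⁻ s in Ioi 0, ENNReal.ofReal s * h s := by
  have hpolar : ∀ z ∈ polarCoord.target,
      ENNReal.ofReal z.1 • h √((polarCoord.symm z).1 ^ 2 + (polarCoord.symm z).2 ^ 2) =
        ENNReal.ofReal z.1 * h z.1 := fun z hz => by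
    have hsq : (z.1 * cos z.2) ^ 2 + (z.1 * sin z.2) ^ 2 = z.1 ^ 2 := by
      linear_combination z.1 ^ 2 * sin_sq_add_cos_sq z.2
    rw [polarCoord_symm_apply, hsq, sqrt_sq (le_of_lt hz.1), smul_eq_mul]
  rw [← lintegral_comp_polarCoord_symm,
    setLIntegral_congr_fun polarCoord.open_target.measurableSet hpolar, polarCoord_target,
    Measure.volume_eq_prod, setLIntegral_prod _ (by fun_prop)]
  simp only [lintegral_const, Measure.restrict_apply_univ, volume_Ioo]
  rw [lintegral_mul_const' _ _ ENNReal.ofReal_ne_top, mul_comm, sub_neg_eq_add, ← two_mul]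

lemma lintegral_halfSpace_eq_spherical {f : ℝ → ℝ → ℝ → ℝ≥0∞}
    (hf : Measurable fun v : ℝ × ℝ × ℝ => f v.1 v.2.1 v.2.2) :
    ∫⁻ x, ∫⁻ y, ∫⁻ s in Ioi 0, f x y s =
      ∫⁻ r in Ioi 0, ∫⁻ θ in Ioo 0 π, ∫⁻ ψ in Ioo 0 π, ENNReal.ofReal (r ^ 2 * sin θ) *
        f (r * cos θ) (r * sin θ * cos ψ) (r * sin θ * sin ψ) := by
  have hinner (x : ℝ) : Measurable fun z : ℝ × ℝ => f x z.1 z.2 := by fun_prop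
  have houter : Measurable fun z : ℝ × ℝ => ∫⁻ ψ in Ioo 0 π,
      ENNReal.ofReal z.2 * f z.1 (z.2 * cos ψ) (z.2 * sin ψ) := by
    fun_prop
  have hjac {r θ : ℝ} (hr : 0 < r) : ENNReal.ofReal (r ^ 2 * sin θ) =
      ENNReal.ofReal r * ENNReal.ofReal (r * sin θ) := by
    rw [← ENNReal.ofReal_mul hr.le, sq, mul_assoc]
  simp_rw [fun x => lintegral_halfPlane_eq_polar (g := f x) (hinner x)]
  rw [lintegral_halfPlane_eq_polar (g := fun x ρ => ∫⁻ ψ in Ioo 0 π,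
    ENNReal.ofReal ρ * f x (ρ * cos ψ) (ρ * sin ψ)) houter]
  refine setLIntegral_congr_fun measurableSet_Ioi fun r hr => lintegral_congr fun θ => ?_
  rw [← lintegral_const_mul' _ _ ENNReal.ofReal_ne_top]
  simp only [hjac hr, mul_assoc]

lemma lintegral_hyperspherical {f : ℝ → ℝ → ℝ → ℝ≥0∞}
    (hf : Measurable fun v : ℝ × ℝ × ℝ => f v.1 v.2.1 v.2.2) :
    ∫⁻ x, ∫⁻ y, ∫⁻ w : ℝ × ℝ, f x y √(w.1 ^ 2 + w.2 ^ 2) =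
      ENNReal.ofReal (2 * π) * ∫⁻ r in Ioi 0, ∫⁻ θ in Ioo 0 π, ∫⁻ ψ in Ioo 0 π,
        ENNReal.ofReal (r ^ 3 * sin θ ^ 2 * sin ψ) *
          f (r * cos θ) (r * sin θ * cos ψ) (r * sin θ * sin ψ) := by
  have hsection (x y : ℝ) : Measurable (f x y) := by fun_prop
  have hjac {r θ ψ : ℝ} (hr : 0 < r) (hθ : θ ∈ Ioo 0 π) :
      ENNReal.ofReal (r ^ 3 * sin θ ^ 2 * sin ψ) =
        ENNReal.ofReal (r ^ 2 * sin θ) * ENNReal.ofReal (r * sin θ * sin ψ) := by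
    have hsin := sin_pos_of_mem_Ioo hθ
    rw [← ENNReal.ofReal_mul (by positivity)]
    ring_nf
  calc _ = ∫⁻ x, ∫⁻ y, ENNReal.ofReal (2 * π) * ∫⁻ s in Ioi 0, ENNReal.ofReal s * f x y s := by
        simp_rw [fun x y => lintegral_comp_sqrt_sq_add_sq (hsection x y)]
    _ = ENNReal.ofReal (2 * π) * ∫⁻ x, ∫⁻ y, ∫⁻ s in Ioi 0, ENNReal.ofReal s * f x y s := by
        simp_rw [lintegral_const_mul' _ _ ENNReal.ofReal_ne_top]
    _ = _ := by
        rw [lintegral_halfSpace_eq_spherical (f := fun x y s => ENNReal.ofReal s * f x y s)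
          (by fun_prop)]
        congr 1
        refine setLIntegral_congr_fun measurableSet_Ioi fun r hr =>
          setLIntegral_congr_fun measurableSet_Ioo fun θ hθ => lintegral_congr fun ψ => ?_
        rw [hjac hr hθ]
        exact (mul_assoc _ _ _).symm

lemma lintegral_pi_fin_succ {n : ℕ} {f : (Fin (n + 1) → ℝ) → ℝ≥0∞} (hf : Measurable f) :
    ∫⁻ v, f v = ∫⁻ x, ∫⁻ w : Fin n → ℝ, f (Matrix.vecCons x w) := by
  have e := (volume_preserving_piFinSuccAbove (fun _ : Fin (n + 1) => ℝ) 0).symm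
  have hcons (z : ℝ × (Fin n → ℝ)) : (MeasurableEquiv.piFinSuccAbove
      (fun _ : Fin (n + 1) => ℝ) 0).symm z = Matrix.vecCons z.1 z.2 :=
    Fin.insertNth_zero' z.1 z.2
  have hfcons := hf.comp e.measurable
  simp only [Function.comp_def, hcons] at hfcons
  rw [← e.lintegral_comp hf, Measure.volume_eq_prod]
  simp_rw [hcons]
  exact lintegral_prod _ hfcons.aemeasurable

lemma lintegral_euclideanSpace_four {f : EuclideanSpace ℝ (Fin 4) → ℝ≥0∞} (hf : Measurable f) :
    ∫⁻ v, f v = ∫⁻ x, ∫⁻ y, ∫⁻ w : ℝ × ℝ, f !₂[x, y, w.1, w.2] := by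
  have hcons {n : ℕ} (x : ℝ) : Measurable fun w : Fin n → ℝ => Matrix.vecCons x w :=
    measurable_pi_iff.2 (Fin.cases measurable_const measurable_pi_apply)
  have e := (EuclideanSpace.volume_preserving_symm_measurableEquiv_toLp (Fin 4)).symm
  have e₂ := (volume_preserving_finTwoArrow ℝ).symm
  have hf₄ := hf.comp e.measurable
  have hf₃ (x : ℝ) := hf₄.comp (hcons x)
  have hf₂ (x y : ℝ) := (hf₃ x).comp (hcons y)
  exact (e.lintegral_comp hf).symm.trans <| (lintegral_pi_fin_succ hf₄).trans <|
    lintegral_congr fun x => (lintegral_pi_fin_succ (hf₃ x)).trans <|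
      lintegral_congr fun y => (e₂.lintegral_comp (hf₂ x y)).symm

open InnerProductGeometry
open scoped RealInnerProductSpace

section Hyperspherical

variable {E : Type*} [NormedAddCommGroup E] [InnerProductSpace ℝ E]

lemma exists_orthonormalBasis_eq_norm_smul [FiniteDimensional ℝ E] {ι : Type*} [Fintype ι]
    (hcard : Module.finrank ℝ E = Fintype.card ι) {w : ι → E}
    (hw : Pairwise fun i j => ⟪w i, w j⟫ = 0) :
    ∃ b : OrthonormalBasis ι ℝ E, ∀ i, w i = ‖w i‖ • b i := by
  have hunit : Orthonormal ℝ ({i | w i ≠ 0}.domRestrict fun i => NormedSpace.normalize (w i)) :=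
    ⟨fun i => NormedSpace.norm_normalize i.2, fun i j hij => by
      simp only [domRestrict_apply, NormedSpace.normalize, real_inner_smul_left,
        real_inner_smul_right, hw (Subtype.coe_injective.ne hij), mul_zero]⟩
  obtain ⟨b, hb⟩ := hunit.exists_orthonormalBasis_extension_of_card_eq hcard
  refine ⟨b, fun i => ?_⟩
  by_cases hi : w i = 0
  · simp [hi]
  · rw [hb i hi, NormedSpace.norm_smul_normalize]

lemma norm_sub_proj_eq_norm_mul_sin_angle (p a : E) (hp : p ≠ 0) :
    ‖a - (⟪p, a⟫ / ‖p‖ ^ 2) • p‖ = ‖a‖ * sin (angle p a) := by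
  have hp' := norm_ne_zero_iff.2 hp
  rw [← sq_eq_sq₀ (norm_nonneg _) (mul_nonneg (norm_nonneg _) (sin_angle_nonneg _ _)),
    norm_sub_sq_real, mul_pow, sin_sq, real_inner_smul_right, norm_smul, real_inner_comm p a,
    ← cos_angle_mul_norm_mul_norm p a, mul_pow, norm_eq_abs, sq_abs]
  field_simp
  ring

lemma exists_orthonormalBasis_polar [FiniteDimensional ℝ E] {n : ℕ}
    (hE : Module.finrank ℝ E = n + 2) {p : E} (hp : p ≠ 0) (a : E) :
    ∃ b : OrthonormalBasis (Fin (n + 2)) ℝ E, p = ‖p‖ • b 0 ∧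
      a = ‖a‖ • (cos (angle p a) • b 0 + sin (angle p a) • b 1) := by
  set d := a - (⟪p, a⟫ / ‖p‖ ^ 2) • p with hd
  have hpd : ⟪p, d⟫ = 0 := by
    rw [hd, inner_sub_right, real_inner_smul_right, real_inner_self_eq_norm_sq,
      div_mul_cancel₀ _ (by simpa using hp), sub_self]
  let w : Fin (n + 2) → E := Fin.cons p (Fin.cons d 0)
  have hw : Pairwise fun i j => ⟪w i, w j⟫ = 0 :=
    Fin.cases (Fin.cases (by simp) (Fin.cases (by simp [w, hpd]) (by simp [w])))
      (Fin.cases (Fin.cases (by simp [w, hpd, real_inner_comm]) (Fin.cases (by simp) (by simp [w])))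
        (by simp [w]))
  obtain ⟨b, hb⟩ := exists_orthonormalBasis_eq_norm_smul
    (hE.trans (Fintype.card_fin _).symm) hw
  have hb₀ : p = ‖p‖ • b 0 := hb 0
  have hb₁ : d = ‖d‖ • b 1 := hb 1
  refine ⟨b, hb₀, ?_⟩
  have := norm_ne_zero_iff.2 hp
  rw [norm_sub_proj_eq_norm_mul_sin_angle p a hp] at hb₁
  calc a = (⟪p, a⟫ / ‖p‖ ^ 2) • p + d := by rw [hd, add_sub_cancel]
    _ = (‖a‖ * cos (angle p a)) • b 0 + (‖a‖ * sin (angle p a)) • b 1 := by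
      nth_rw 3 [hb₀]
      rw [← hb₁, smul_smul, ← cos_angle_mul_norm_mul_norm p a]
      congr 2
      field_simp
    _ = _ := by rw [smul_add, smul_smul, smul_smul]

variable [MeasurableSpace E] [BorelSpace E]

lemma lintegral_orthonormalBasis_coords [FiniteDimensional ℝ E]
    (b : OrthonormalBasis (Fin 4) ℝ E) {f : ℝ → ℝ → ℝ → ℝ≥0∞}
    (hf : Measurable fun v : ℝ × ℝ × ℝ => f v.1 v.2.1 v.2.2) :
    ∫⁻ q, f ⟪b 0, q⟫ ⟪b 1, q⟫ √(⟪b 2, q⟫ ^ 2 + ⟪b 3, q⟫ ^ 2) =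
      ENNReal.ofReal (2 * π) * ∫⁻ r in Ioi 0, ∫⁻ θ in Ioo 0 π, ∫⁻ ψ in Ioo 0 π,
        ENNReal.ofReal (r ^ 3 * sin θ ^ 2 * sin ψ) *
          f (r * cos θ) (r * sin θ * cos ψ) (r * sin θ * sin ψ) := by
  have hmeas : Measurable fun v : EuclideanSpace ℝ (Fin 4) =>
      f (v 0) (v 1) √(v 2 ^ 2 + v 3 ^ 2) :=
    hf.comp (by fun_prop : Measurable fun v : EuclideanSpace ℝ (Fin 4) =>
      (v 0, v 1, √(v 2 ^ 2 + v 3 ^ 2)))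
  simp_rw [← b.repr_apply_apply]
  rw [b.measurePreserving_repr.lintegral_comp hmeas, lintegral_euclideanSpace_four hmeas,
    ← lintegral_hyperspherical hf]
  rfl

variable [FiniteDimensional ℝ E]

lemma lintegral_hyperspherical_inner (hE : Module.finrank ℝ E = 4) {p : E} (hp : p ≠ 0) (a : E)
    {g : ℝ → ℝ → ℝ → ℝ≥0∞} (hg : Measurable fun v : ℝ × ℝ × ℝ => g v.1 v.2.1 v.2.2) :
    ∫⁻ q, g ‖q‖ (angle p q) ⟪a, q⟫ =
      ENNReal.ofReal (2 * π) * ∫⁻ r in Ioi 0, ∫⁻ θ in Ioo 0 π, ∫⁻ ψ in Ioo 0 π,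
        ENNReal.ofReal (r ^ 3 * sin θ ^ 2 * sin ψ) * g r θ (‖a‖ * r *
          (cos (angle p a) * cos θ + sin (angle p a) * sin θ * cos ψ)) := by
  obtain ⟨b, hb₀, hb₁⟩ := exists_orthonormalBasis_polar hE hp a
  let f (x y z : ℝ) : ℝ≥0∞ := g √(x ^ 2 + y ^ 2 + z ^ 2) (arccos (x / √(x ^ 2 + y ^ 2 + z ^ 2)))
    (‖a‖ * (cos (angle p a) * x + sin (angle p a) * y))
  have hf : Measurable fun v : ℝ × ℝ × ℝ => f v.1 v.2.1 v.2.2 :=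
    hg.comp (by fun_prop : Measurable fun v : ℝ × ℝ × ℝ =>
      (√(v.1 ^ 2 + v.2.1 ^ 2 + v.2.2 ^ 2), arccos (v.1 / √(v.1 ^ 2 + v.2.1 ^ 2 + v.2.2 ^ 2)),
        ‖a‖ * (cos (angle p a) * v.1 + sin (angle p a) * v.2.1)))
  have hnorm (q : E) :
      √(⟪b 0, q⟫ ^ 2 + ⟪b 1, q⟫ ^ 2 + √(⟪b 2, q⟫ ^ 2 + ⟪b 3, q⟫ ^ 2) ^ 2) = ‖q‖ := by
    rw [sq_sqrt (by positivity), ← add_assoc, sqrt_eq_iff_eq_sq (by positivity) (norm_nonneg q),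
      ← b.sum_sq_inner_right q, Fin.sum_univ_four]
  have hangle (q : E) : arccos (⟪b 0, q⟫ / ‖q‖) = angle p q := by
    rw [hb₀, angle_smul_left_of_pos _ _ (norm_pos_iff.2 hp), angle, b.norm_eq_one, one_mul]
  have hinner (q : E) :
      ‖a‖ * (cos (angle p a) * ⟪b 0, q⟫ + sin (angle p a) * ⟪b 1, q⟫) = ⟪a, q⟫ := by
    conv_rhs => rw [hb₁]
    rw [real_inner_smul_left, inner_add_left, real_inner_smul_left, real_inner_smul_left]
  have h := lintegral_orthonormalBasis_coords b hf
  simp only [f, hnorm, hangle, hinner] at h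
  rw [h]
  congr 1
  refine setLIntegral_congr_fun measurableSet_Ioi fun r hr => setLIntegral_congr_fun
    measurableSet_Ioo fun θ hθ => lintegral_congr fun ψ => ?_
  have hsq : (r * cos θ) ^ 2 + (r * sin θ * cos ψ) ^ 2 + (r * sin θ * sin ψ) ^ 2 = r ^ 2 := by
    linear_combination r ^ 2 * sin_sq_add_cos_sq θ + r ^ 2 * sin θ ^ 2 * sin_sq_add_cos_sq ψ
  rw [hsq, sqrt_sq (le_of_lt hr), mul_div_cancel_left₀ _ (ne_of_gt hr), arccos_cos hθ.1.le hθ.2.le]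
  ring_nf

lemma lintegral_hyperspherical_angle (hE : Module.finrank ℝ E = 4) {p : E} (hp : p ≠ 0)
    {g : ℝ → ℝ → ℝ≥0∞} (hg : Measurable fun v : ℝ × ℝ => g v.1 v.2) :
    ∫⁻ q, g ‖q‖ (angle p q) =
      ENNReal.ofReal (4 * π) * ∫⁻ r in Ioi 0, ∫⁻ θ in Ioo 0 π,
        ENNReal.ofReal (r ^ 3 * sin θ ^ 2) * g r θ := by
  have hsin : ENNReal.ofReal (4 * π) =
      ENNReal.ofReal (2 * π) * ∫⁻ ψ in Ioo 0 π, ENNReal.ofReal (sin ψ) := by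
    rw [lintegral_Ioo_ofReal pi_pos.le continuous_sin fun ψ hψ => (sin_pos_of_mem_Ioo hψ).le,
      integral_sin, cos_zero, cos_pi, ← ENNReal.ofReal_mul (by positivity)]
    ring_nf
  rw [lintegral_hyperspherical_inner hE hp 0 (g := fun r θ _ => g r θ) (by fun_prop),
    hsin, mul_assoc]
  congr 1
  rw [← lintegral_const_mul _ (by fun_prop)]
  refine setLIntegral_congr_fun measurableSet_Ioi fun r (hr : 0 < r) => ?_
  rw [← lintegral_const_mul _ (by fun_prop)]
  refine lintegral_congr fun θ => ?_
  rw [← lintegral_mul_const _ (by fun_prop)]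
  refine lintegral_congr fun ψ => ?_
  rw [ENNReal.ofReal_mul (by positivity)]
  ring

lemma lintegral_prod_hyperspherical (hE : Module.finrank ℝ E = 4) {p : E} (hp : p ≠ 0)
    {G : ℝ → ℝ → ℝ → ℝ → ℝ → ℝ≥0∞}
    (hG : Measurable fun v : ℝ × ℝ × ℝ × ℝ × ℝ => G v.1 v.2.1 v.2.2.1 v.2.2.2.1 v.2.2.2.2) :
    ∫⁻ q : E × E, G ‖q.1‖ (angle p q.1) ‖q.2‖ (angle p q.2) ⟪q.1, q.2⟫ =
      ENNReal.ofReal (8 * π ^ 2) *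
        ∫⁻ r in Ioi 0, ∫⁻ r' in Ioi 0, ∫⁻ θ in Ioo 0 π, ∫⁻ φ in Ioo 0 π, ∫⁻ ψ in Ioo 0 π,
          ENNReal.ofReal (r ^ 3 * sin θ ^ 2) * (ENNReal.ofReal (r' ^ 3 * sin φ ^ 2 * sin ψ) *
            G r θ r' φ (r * r' * (cos θ * cos φ + sin θ * sin φ * cos ψ))) := by
  let H (r θ : ℝ) : ℝ≥0∞ := ∫⁻ r' in Ioi 0, ∫⁻ φ in Ioo 0 π, ∫⁻ ψ in Ioo 0 π,
    ENNReal.ofReal (r' ^ 3 * sin φ ^ 2 * sin ψ) *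
      G r θ r' φ (r * r' * (cos θ * cos φ + sin θ * sin φ * cos ψ))
  have hH : Measurable fun v : ℝ × ℝ => H v.1 v.2 := by fun_prop
  have hGq : Measurable fun q : E × E =>
      G ‖q.1‖ (angle p q.1) ‖q.2‖ (angle p q.2) ⟪q.1, q.2⟫ := by
    unfold angle
    fun_prop
  have hinner (x : E) : ∫⁻ y, G ‖x‖ (angle p x) ‖y‖ (angle p y) ⟪x, y⟫ =
      ENNReal.ofReal (2 * π) * H ‖x‖ (angle p x) :=
    lintegral_hyperspherical_inner hE hp x (g := G ‖x‖ (angle p x)) (by fun_prop)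
  rw [Measure.volume_eq_prod, lintegral_prod _ hGq.aemeasurable]
  simp_rw [hinner, lintegral_const_mul' _ _ ENNReal.ofReal_ne_top]
  rw [lintegral_hyperspherical_angle hE hp hH, ← mul_assoc, ← ENNReal.ofReal_mul (by positivity),
    show 2 * π * (4 * π) = 8 * π ^ 2 by ring]
  congr 1
  refine lintegral_congr fun r => ?_
  rw [← lintegral_lintegral_swap]
  · simp_rw [lintegral_const_mul' _ _ ENNReal.ofReal_ne_top, H]
  · fun_prop

end Hyperspherical

/-! ### The two-loop integral in logarithmic radii -/

lemma lintegral_Ioi_eq_lintegral_mul_exp {c : ℝ} (hc : 0 < c) (g : ℝ → ℝ≥0∞) :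
    ∫⁻ r in Ioi 0, g r = ∫⁻ t, ENNReal.ofReal (c * exp t) * g (c * exp t) := by
  have himage : (fun t => c * exp t) '' univ = Ioi 0 := by
    refine Subset.antisymm (image_subset_iff.2 fun t _ => mul_pos hc (exp_pos t)) fun r hr => ?_
    exact ⟨log (r / c), mem_univ _, by
      simp only [exp_log (div_pos hr hc), mul_div_cancel₀ _ hc.ne']⟩
  have hinj : InjOn (fun t => c * exp t) univ :=
    ((mul_right_injective₀ hc.ne').comp exp_injective).injOn
  rw [← himage, lintegral_image_eq_lintegral_abs_deriv_mul MeasurableSet.univ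
    (fun t _ => ((hasDerivAt_exp t).const_mul c).hasDerivWithinAt) hinj, setLIntegral_univ]
  simp_rw [abs_of_pos (mul_pos hc (exp_pos _))]

lemma sq_add_sq_sub_mul_exp (c s t x : ℝ) :
    (c * exp s) ^ 2 + (c * exp t) ^ 2 - 2 * (c * exp s * (c * exp t) * x) =
      2 * c ^ 2 * exp s * exp t * (cosh (s - t) - x) := by
  rw [cosh_eq, neg_sub, exp_sub, exp_sub]
  field_simp

/-- The two-loop integrand in terms of the radii `r`, `r'` of the loop momenta, their angles `θ`,
`φ` with an external momentum of norm `c`, and their inner product `x`. -/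
noncomputable def polarIntegrand (c r θ r' φ x : ℝ) : ℝ :=
  1 / (r ^ 2 * r' ^ 2 * (r ^ 2 + r' ^ 2 - 2 * x) *
    (c ^ 2 + r ^ 2 - 2 * (c * r * cos θ)) * (c ^ 2 + r' ^ 2 - 2 * (c * r' * cos φ)))

lemma jacobian_mul_polarIntegrand_exp {c : ℝ} (hc : 0 < c) (s t θ φ ψ x : ℝ) :
    c * exp s * (c * exp t * ((c * exp s) ^ 3 * sin θ ^ 2 * ((c * exp t) ^ 3 * sin φ ^ 2 * sin ψ *
      polarIntegrand c (c * exp s) θ (c * exp t) φ (c * exp s * (c * exp t) * x)))) =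
    1 / (8 * c ^ 2) * (conjPoissonKernel s θ * conjPoissonKernel t φ * (sin θ * sin φ)) *
      (sin ψ / (cosh (s - t) - x)) := by
  have hshell (t φ : ℝ) : c ^ 2 + (c * exp t) ^ 2 - 2 * (c * (c * exp t) * cos φ) =
      2 * c ^ 2 * exp t * (cosh t - cos φ) := by
    simpa using sq_add_sq_sub_mul_exp c 0 t (cos φ)
  rw [polarIntegrand, sq_add_sq_sub_mul_exp, hshell, hshell, conjPoissonKernel, conjPoissonKernel]
  field_simp
  norm_num

lemma lintegral_jacobian_mul_polarIntegrand_exp {c s t θ φ : ℝ} (hc : 0 < c) (hs : s ≠ 0)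
    (ht : t ≠ 0) (hst : s - t ≠ 0) (hθ : θ ∈ Ioo 0 π) (hφ : φ ∈ Ioo 0 π) :
    ∫⁻ ψ in Ioo 0 π, ENNReal.ofReal (c * exp s) * (ENNReal.ofReal (c * exp t) *
      (ENNReal.ofReal ((c * exp s) ^ 3 * sin θ ^ 2) *
        (ENNReal.ofReal ((c * exp t) ^ 3 * sin φ ^ 2 * sin ψ) *
          ENNReal.ofReal (polarIntegrand c (c * exp s) θ (c * exp t) φ
            (c * exp s * (c * exp t) * (cos θ * cos φ + sin θ * sin φ * cos ψ)))))) =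
      ENNReal.ofReal (1 / (8 * c ^ 2)) * ENNReal.ofReal (angularDensity s t (s - t) θ φ) := by
  have hsinθ := sin_pos_of_mem_Ioo hθ
  have hsinφ := sin_pos_of_mem_Ioo hφ
  have hK := mul_nonneg (conjPoissonKernel_nonneg hs hθ) (conjPoissonKernel_nonneg ht hφ)
  calc _ = ∫⁻ ψ in Ioo 0 π, ENNReal.ofReal
          (1 / (8 * c ^ 2) * (conjPoissonKernel s θ * conjPoissonKernel t φ * (sin θ * sin φ))) *
        ENNReal.ofReal
          (sin ψ / (cosh (s - t) - (cos θ * cos φ + sin θ * sin φ * cos ψ))) := by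
        refine setLIntegral_congr_fun measurableSet_Ioo fun ψ hψ => ?_
        have hsinψ := sin_pos_of_mem_Ioo hψ
        rw [← ENNReal.ofReal_mul (by positivity), ← ENNReal.ofReal_mul (by positivity),
          ← ENNReal.ofReal_mul (by positivity), ← ENNReal.ofReal_mul (by positivity),
          ← ENNReal.ofReal_mul (by positivity), jacobian_mul_polarIntegrand_exp hc]
    _ = _ := by
        rw [lintegral_const_mul' _ _ ENNReal.ofReal_ne_top, lintegral_azimuth hst hθ hφ,
          ← ENNReal.ofReal_mul (by positivity), ← ENNReal.ofReal_mul (by positivity)]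
        congr 1
        rw [angularDensity]
        field_simp

lemma lintegral_lintegral_angularDensity :
    ∫⁻ s, ∫⁻ t, ∫⁻ θ in Ioo 0 π, ∫⁻ φ in Ioo 0 π,
        ENNReal.ofReal (angularDensity s t (s - t) θ φ) =
      ∑' n : ℕ, ENNReal.ofReal (6 * π ^ 2 / ((n : ℝ) + 1) ^ 3) := by
  calc _ = ∫⁻ s, ∫⁻ t, ∑' n : ℕ, ENNReal.ofReal
          (4 * π ^ 2 / (n + 1) * exp (-((n + 1) * (|s| + |t| + |s - t|)))) := by
        refine lintegral_congr_ae ((Measure.ae_ne volume 0).mono fun s hs => lintegral_congr_ae ?_)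
        filter_upwards [Measure.ae_ne volume 0, Measure.ae_ne volume s] with t ht hst
        exact lintegral_angularDensity hs ht (sub_ne_zero.2 hst.symm)
    _ = ∑' n : ℕ, ∫⁻ s, ∫⁻ t, ENNReal.ofReal
          (4 * π ^ 2 / (n + 1) * exp (-((n + 1) * (|s| + |t| + |s - t|)))) := by
        rw [← lintegral_tsum fun n => by fun_prop]
        refine lintegral_congr fun s => ?_
        rw [lintegral_tsum fun n => by fun_prop]
    _ = _ := by
        refine tsum_congr fun n => ?_
        have hn : (0 : ℝ) < n + 1 := by positivity
        simp_rw [ENNReal.ofReal_mul (by positivity : 0 ≤ 4 * π ^ 2 / ((n : ℝ) + 1)),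
          lintegral_const_mul' _ _ ENNReal.ofReal_ne_top]
        rw [lintegral_lintegral_exp_neg_abs hn, ← ENNReal.ofReal_mul (by positivity)]
        congr 1
        field_simp
        norm_num

lemma integrable_and_integral_eq_of_lintegral_ofReal {α : Type*} [MeasurableSpace α]
    {μ : Measure α} {f : α → ℝ} {c : ℝ} (hf : AEStronglyMeasurable f μ) (hf₀ : 0 ≤ f) (hc : 0 ≤ c)
    (h : ∫⁻ x, ENNReal.ofReal (f x) ∂μ = ENNReal.ofReal c) :
    Integrable f μ ∧ ∫ x, f x ∂μ = c := by
  have hf₀' : 0 ≤ᵐ[μ] f := .of_forall hf₀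
  refine ⟨⟨hf, (hasFiniteIntegral_iff_ofReal hf₀').2 (h ▸ ENNReal.ofReal_lt_top)⟩, ?_⟩
  rw [integral_eq_lintegral_of_nonneg_ae hf₀' hf, h, ENNReal.toReal_ofReal hc]

lemma ofReal_tsum_one_div_nat_add_one_cube_eq_riemannZeta :
    ((∑' n : ℕ, 1 / ((n : ℝ) + 1) ^ 3 : ℝ) : ℂ) = riemannZeta 3 := by
  rw [zeta_eq_tsum_one_div_nat_add_one_cpow (by norm_num), Complex.ofReal_tsum]
  refine tsum_congr fun n => ?_
  push_cast
  norm_cast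

section TwoLoop

variable {E : Type*} [NormedAddCommGroup E] [InnerProductSpace ℝ E]

/-- The product of the five propagators of the two-loop diagram with external momentum `p` and loop
momenta `q.1`, `q.2`; it has the junk value `0` where a propagator is singular. -/
noncomputable def twoLoopIntegrand (p : E) (q : E × E) : ℝ :=
  1 / (‖q.1‖ ^ 2 * ‖q.2‖ ^ 2 * ‖q.1 - q.2‖ ^ 2 * ‖p - q.1‖ ^ 2 * ‖p - q.2‖ ^ 2)

lemma twoLoopIntegrand_eq_polarIntegrand (p : E) (q : E × E) :
    twoLoopIntegrand p q =
      polarIntegrand ‖p‖ ‖q.1‖ (angle p q.1) ‖q.2‖ (angle p q.2) ⟪q.1, q.2⟫ := by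
  have hlaw (x : E) : ‖p - x‖ ^ 2 = ‖p‖ ^ 2 + ‖x‖ ^ 2 - 2 * (‖p‖ * ‖x‖ * cos (angle p x)) := by
    rw [norm_sub_sq_real, ← cos_angle_mul_norm_mul_norm p x]
    ring
  rw [twoLoopIntegrand, polarIntegrand, hlaw, hlaw, norm_sub_sq_real q.1 q.2]
  ring_nf

variable [FiniteDimensional ℝ E] [MeasurableSpace E] [BorelSpace E]

lemma lintegral_twoLoopIntegrand_eq_lintegral_angularDensity
    (hE : Module.finrank ℝ E = 4) {p : E} (hp : p ≠ 0) :
    ∫⁻ q, ENNReal.ofReal (twoLoopIntegrand p q) =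
      ENNReal.ofReal (π ^ 2 / ‖p‖ ^ 2) * ∫⁻ s, ∫⁻ t, ∫⁻ θ in Ioo 0 π, ∫⁻ φ in Ioo 0 π,
        ENNReal.ofReal (angularDensity s t (s - t) θ φ) := by
  have hP := norm_pos_iff.2 hp
  have hconst : ENNReal.ofReal (π ^ 2 / ‖p‖ ^ 2) =
      ENNReal.ofReal (8 * π ^ 2) * ENNReal.ofReal (1 / (8 * ‖p‖ ^ 2)) := by
    rw [← ENNReal.ofReal_mul (by positivity)]
    congr 1
    field_simp
  simp_rw [twoLoopIntegrand_eq_polarIntegrand]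
  rw [lintegral_prod_hyperspherical hE hp
      (G := fun r θ r' φ x => ENNReal.ofReal (polarIntegrand ‖p‖ r θ r' φ x))
      (by unfold polarIntegrand; fun_prop), hconst, mul_assoc]
  congr 1
  simp_rw [lintegral_Ioi_eq_lintegral_mul_exp hP, ← lintegral_const_mul' _ _ ENNReal.ofReal_ne_top]
  refine lintegral_congr_ae ((Measure.ae_ne volume 0).mono fun s hs => lintegral_congr_ae ?_)
  filter_upwards [Measure.ae_ne volume 0, Measure.ae_ne volume s] with t ht hst
  refine setLIntegral_congr_fun measurableSet_Ioo fun θ hθ =>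
    setLIntegral_congr_fun measurableSet_Ioo fun φ hφ => ?_
  exact lintegral_jacobian_mul_polarIntegrand_exp hP hs ht (sub_ne_zero.2 hst.symm) hθ hφ

lemma lintegral_twoLoopIntegrand (hE : Module.finrank ℝ E = 4) {p : E} (hp : p ≠ 0) :
    ∫⁻ q, ENNReal.ofReal (twoLoopIntegrand p q) =
      ENNReal.ofReal (6 * π ^ 4 / ‖p‖ ^ 2 * ∑' n : ℕ, 1 / ((n : ℝ) + 1) ^ 3) := by
  have hsum : Summable fun n : ℕ => 1 / ((n : ℝ) + 1) ^ 3 := by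
    exact_mod_cast (summable_nat_add_iff 1).2 (summable_one_div_nat_pow.2 (by norm_num : 1 < 3))
  rw [lintegral_twoLoopIntegrand_eq_lintegral_angularDensity hE hp,
    lintegral_lintegral_angularDensity, ← ENNReal.tsum_mul_left, ← tsum_mul_left,
    ENNReal.ofReal_tsum_of_nonneg (fun n => by positivity) (hsum.mul_left _)]
  refine tsum_congr fun n => ?_
  rw [← ENNReal.ofReal_mul (by positivity)]
  ring_nf

theorem two_loop_p_integral_eq_six_zeta_three_div_psq_general
    (hE : Module.finrank ℝ E = 4) {p : E} (hp : p ≠ 0) :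
    Integrable (fun q : E × E =>
      1 / (‖q.1‖ ^ 2 * ‖q.2‖ ^ 2 * ‖q.1 - q.2‖ ^ 2 * ‖p - q.1‖ ^ 2 * ‖p - q.2‖ ^ 2)) ∧
    (((1 / π ^ 4) * ∫ q : E × E,
        1 / (‖q.1‖ ^ 2 * ‖q.2‖ ^ 2 * ‖q.1 - q.2‖ ^ 2 * ‖p - q.1‖ ^ 2 * ‖p - q.2‖ ^ 2) : ℝ) : ℂ)
      = 6 * riemannZeta 3 / ((‖p‖ : ℂ) ^ 2) := by
  have hmeas : Measurable (twoLoopIntegrand p) := by unfold twoLoopIntegrand; fun_prop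
  have hnonneg : 0 ≤ twoLoopIntegrand p := fun q => by unfold twoLoopIntegrand; positivity
  have hvalue : 0 ≤ 6 * π ^ 4 / ‖p‖ ^ 2 * ∑' n : ℕ, 1 / ((n : ℝ) + 1) ^ 3 :=
    mul_nonneg (by positivity) (tsum_nonneg fun n => by positivity)
  obtain ⟨hint, heq⟩ := integrable_and_integral_eq_of_lintegral_ofReal
    hmeas.aestronglyMeasurable hnonneg hvalue (lintegral_twoLoopIntegrand hE hp)
  refine ⟨hint, ?_⟩
  simp only [twoLoopIntegrand] at heq
  rw [heq, ← ofReal_tsum_one_div_nat_add_one_cube_eq_riemannZeta]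
  have hπ := Complex.ofReal_ne_zero.2 pi_ne_zero
  push_cast
  field_simp

end TwoLoop

end

/-- The two-loop momentum-space `p`-integral of the wheel with three spokes:
its value is the period `P₃ = 6ζ(3)` divided by `p²`. -/
theorem two_loop_p_integral_eq_six_zeta_three_div_psq
    (p : EuclideanSpace ℝ (Fin 4)) (hp : p ≠ 0) :
    Integrable (fun q : EuclideanSpace ℝ (Fin 4) × EuclideanSpace ℝ (Fin 4) =>
      1 / (‖q.1‖ ^ 2 * ‖q.2‖ ^ 2 * ‖q.1 - q.2‖ ^ 2 * ‖p - q.1‖ ^ 2 * ‖p - q.2‖ ^ 2)) ∧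
    (((1 / Real.pi ^ 4) * ∫ q : EuclideanSpace ℝ (Fin 4) × EuclideanSpace ℝ (Fin 4),
        1 / (‖q.1‖ ^ 2 * ‖q.2‖ ^ 2 * ‖q.1 - q.2‖ ^ 2 * ‖p - q.1‖ ^ 2 * ‖p - q.2‖ ^ 2) : ℝ) : ℂ)
      = 6 * riemannZeta 3 / ((‖p‖ : ℂ) ^ 2) :=
  two_loop_p_integral_eq_six_zeta_three_div_psq_general finrank_euclideanSpace_fin hp
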